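/- Let q ∈ ℂ with 0 < |q| < 1, let r be a positive integer, and let a : {1,…,r+1} → ℂ and b : {1,…,r} → ℂ with all a_i, b_i nonzero, a_i ∉ {q^m : m ≥ 1} and b_i ∉ {q^m : m ≥ 1} for each i (so (q/a_i;q)_n ≠ 0 and (q/b_i;q)_n ≠ 0 for all n), and b_i ∉ {q^m : m ∈ ℤ} for each i (so (b_i q^{-n};q)_m ≠ 0 for all n, m). Let x, y ∈ ℂ with y ≠ 0 and x ≠ q^{-m} for every m ∈ ℕ. Assume the families (n,m) ↦ q^{n^2} [∏_{i=1}^{r}(q/b_i;q)_n / ∏_{i=1}^{r+1}(q/a_i;q)_n] (x b₁⋯b_r / (y a₁⋯a_{r+1}))^n · [∏_{i=1}^{r+1}(a_i q^{-n};q)_m / ((q;q)_m ∏_{i=1}^{r}(b_i q^{-n};q)_m)] y^m / (q;q)_n and (n,m) ↦ q^{n^2} [∏_{i=1}^{r}(q/b_i;q)_n / ∏_{i=1}^{r+1}(q/a_i;q)_n] (x b₁⋯b_r / (y a₁⋯a_{r+1}))^n · [∏_{i=1}^{r+1}(a_i q^{-n};q)_m / ((q;q)_m ∏_{i=1}^{r}(b_i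 q^{-n};q)_m)] (y q^n)^m / ((q;q)_n (x;q)_n), both indexed by ℕ×ℕ, are absolutely summable. Then ∑_{n≥0} [q^{n^2}/(q;q)_n] [∏_{i=1}^{r}(q/b_i;q)_n / ∏_{i=1}^{r+1}(q/a_i;q)_n] (x b₁⋯b_r/(y a₁⋯a_{r+1}))^n · ∑_{m≥0} [∏_{i=1}^{r+1}(a_i q^{-n};q)_m / ((q;q)_m ∏_{i=1}^{r}(b_i q^{-n};q)_m)] y^m = (x;q)_∞ · ∑_{n≥0} [q^{n^2}/((q;q)_n (x;q)_n)] [∏_{i=1}^{r}(q/b_i;q)_n / ∏_{i=1}^{r+1}(q/a_i;q)_n] (x b₁⋯b_r/(y a₁⋯a_{r+1}))^n · ∑_{m≥0} [∏_{i=1}^{r+1}(a_i q^{-n};q)_m / ((q;q)_m ∏_{i=1}^{r}(b_i q^{-n};q)_m)] (y q^n)^m. -/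

import Mathlib

/-!
For `x` fixed, a double sequence with `R (n + 1) (m + 1) = -(x q ^ n) R n m` satisfies
`R (n + s) (m + s) = R n m (-(x q ^ n)) ^ s q ^ (s choose 2)`, and after division by `(q;q)_s` the
extra factor is the `s`-th term of Euler's expansion of `(x q ^ n;q)_∞ = (x;q)_∞ / (x;q)_n`.
So the right-hand side is the triple series of
`R (n + s) (m + s) q ^ (n m) / ((q;q)_n (q;q)_m (q;q)_s)`. Collecting the terms with the same
`(n + s, m + s) = (N, M)` and summing over `s` by the limit case
`∑ s, q ^ ((N - s) (M - s)) / ((q;q)_(N-s) (q;q)_(M-s) (q;q)_s) = 1 / ((q;q)_N (q;q)_M)`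
of the `q`-Chu–Vandermonde identity gives the left-hand side.
-/

/-- The finite q-shifted factorial `(a;q)_n = ∏_{k=0}^{n-1} (1 - a q^k)`. -/
noncomputable def qPoch (a q : ℂ) (n : ℕ) : ℂ := ∏ k ∈ Finset.range n, (1 - a * q ^ k)

/-- The infinite q-shifted factorial `(a;q)_∞ = ∏_{k=0}^{∞} (1 - a q^k)`. -/
noncomputable def qPochInf (a q : ℂ) : ℂ := ∏' k : ℕ, (1 - a * q ^ k)

open Finset Filter Topology

section QPoch

variable {q : ℂ}

theorem qPoch_zero (a q : ℂ) : qPoch a q 0 = 1 := by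
  simp [qPoch]

theorem qPoch_succ (a q : ℂ) (n : ℕ) : qPoch a q (n + 1) = qPoch a q n * (1 - a * q ^ n) :=
  prod_range_succ _ n

theorem qPoch_succ_eq_one_sub_mul (a q : ℂ) (n : ℕ) :
    qPoch a q (n + 1) = (1 - a) * qPoch (a * q) q n := by
  simp only [qPoch, prod_range_succ', pow_zero, mul_one, pow_succ', mul_assoc, mul_comm]

theorem qPoch_ne_zero_iff {a : ℂ} {n : ℕ} : qPoch a q n ≠ 0 ↔ ∀ k < n, a * q ^ k ≠ 1 := by
  simp only [qPoch, prod_ne_zero_iff, mem_range, sub_ne_zero, ne_comm (a := (1 : ℂ))]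

theorem pow_succ_ne_one_of_norm_lt_one (hq : ‖q‖ < 1) (n : ℕ) : q ^ (n + 1) ≠ 1 := by
  intro h
  have hlt := pow_lt_one₀ (norm_nonneg q) hq n.succ_ne_zero
  rw [← norm_pow, h, norm_one] at hlt
  exact lt_irrefl 1 hlt

theorem qPoch_self_ne_zero (hq : ‖q‖ < 1) (n : ℕ) : qPoch q q n ≠ 0 :=
  qPoch_ne_zero_iff.2 fun k _ => pow_succ' q k ▸ pow_succ_ne_one_of_norm_lt_one hq k

theorem inv_qPoch_self (hq : ‖q‖ < 1) (n : ℕ) :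
    (qPoch q q n)⁻¹ = (1 - q ^ (n + 1)) * (qPoch q q (n + 1))⁻¹ := by
  have hn : 1 - q ^ (n + 1) ≠ 0 := sub_ne_zero.2 (pow_succ_ne_one_of_norm_lt_one hq n).symm
  rw [qPoch_succ, ← pow_succ', mul_inv, mul_left_comm, mul_inv_cancel₀ hn, mul_one]

theorem multipliable_one_sub_mul_pow (hq : ‖q‖ < 1) (a : ℂ) :
    Multipliable fun k : ℕ => 1 - a * q ^ k := by
  simp only [sub_eq_add_neg]
  refine multipliable_one_add_of_summable ?_
  simpa only [norm_neg, norm_mul, norm_pow] using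
    (summable_geometric_of_lt_one (norm_nonneg q) hq).mul_left ‖a‖

theorem tendsto_qPoch_qPochInf (hq : ‖q‖ < 1) (a : ℂ) :
    Tendsto (qPoch a q) atTop (𝓝 (qPochInf a q)) :=
  (multipliable_one_sub_mul_pow hq a).hasProd.tendsto_prod_nat

theorem qPoch_mul_qPochInf (hq : ‖q‖ < 1) (a : ℂ) (n : ℕ) :
    qPoch a q n * qPochInf (a * q ^ n) q = qPochInf a q := by
  have shift (k : ℕ) : 1 - a * q ^ n * q ^ k = 1 - a * q ^ (k + n) := by ring
  have tail := multipliable_one_sub_mul_pow hq (a * q ^ n)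
  simp only [shift] at tail
  rw [qPoch, qPochInf, qPochInf, ← tail.prod_mul_tprod_nat_mul' (f := fun k => 1 - a * q ^ k),
    tprod_congr shift]

end QPoch

section Vandermonde

theorem one_sub_pow_succ_mul_sum_antidiagonal {R : Type*} [CommRing R] (q : R) (f : ℕ × ℕ → R)
    (N : ℕ) : (1 - q ^ (N + 1)) * ∑ p ∈ antidiagonal (N + 1), f p =
      ∑ p ∈ antidiagonal N, (1 - q ^ (p.2 + 1)) * f (p.1, p.2 + 1) +
        ∑ p ∈ antidiagonal N, q ^ p.2 * (1 - q ^ (p.1 + 1)) * f (p.1 + 1, p.2) := by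
  have split : ∀ p ∈ antidiagonal (N + 1), (1 - q ^ (N + 1)) * f p =
      (1 - q ^ p.2) * f p + q ^ p.2 * (1 - q ^ p.1) * f p := by
    intro p hp
    rw [← mem_antidiagonal.1 hp]
    ring
  rw [mul_sum, sum_congr rfl split, sum_add_distrib, Nat.sum_antidiagonal_succ',
    Nat.sum_antidiagonal_succ]
  simp only [pow_zero, sub_self, zero_mul, mul_zero, zero_add]

/-- The summand `q ^ (i (i + k)) / ((q;q)_i (q;q)_(i+k) (q;q)_j)` of the limit case
`sum_antidiagonal_qVandermondeTerm` of the `q`-Chu–Vandermonde identity. The larger of the two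
lower indices is written `i + k`, so that no truncated subtraction occurs. -/
noncomputable def qVandermondeTerm (q : ℂ) (k i j : ℕ) : ℂ :=
  q ^ (i * (i + k)) / (qPoch q q i * qPoch q q (i + k) * qPoch q q j)

variable {q : ℂ}

theorem one_sub_mul_qVandermondeTerm_succ_right (hq : ‖q‖ < 1) (k i j : ℕ) :
    (1 - q ^ (j + 1)) * qVandermondeTerm q k i (j + 1) = qVandermondeTerm q k i j := by
  simp only [qVandermondeTerm, div_eq_mul_inv, mul_inv, inv_qPoch_self hq j]
  ring

theorem one_sub_mul_qVandermondeTerm_succ_left (hq : ‖q‖ < 1) (k i j : ℕ) :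
    (1 - q ^ (i + 1)) * qVandermondeTerm q k (i + 1) j =
      q ^ (i + k + 1) * qVandermondeTerm q (k + 1) i j := by
  simp only [qVandermondeTerm, div_eq_mul_inv, mul_inv, inv_qPoch_self hq i,
    add_right_comm i 1 k, ← add_assoc i k 1]
  ring

theorem sum_antidiagonal_qVandermondeTerm (hq : ‖q‖ < 1) (N k : ℕ) :
    ∑ p ∈ antidiagonal N, qVandermondeTerm q k p.1 p.2 =
      (qPoch q q N)⁻¹ * (qPoch q q (N + k))⁻¹ := by
  induction N generalizing k with
  | zero => simp [qVandermondeTerm, qPoch_zero]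
  | succ N ih =>
    have hN : 1 - q ^ (N + 1) ≠ 0 := sub_ne_zero.2 (pow_succ_ne_one_of_norm_lt_one hq N).symm
    have left : ∀ p ∈ antidiagonal N,
        q ^ p.2 * (1 - q ^ (p.1 + 1)) * qVandermondeTerm q k (p.1 + 1) p.2 =
          q ^ (N + k + 1) * qVandermondeTerm q (k + 1) p.1 p.2 := by
      intro p hp
      rw [mul_assoc, one_sub_mul_qVandermondeTerm_succ_left hq, ← mem_antidiagonal.1 hp]
      ring
    apply mul_left_cancel₀ hN
    calc (1 - q ^ (N + 1)) * ∑ p ∈ antidiagonal (N + 1), qVandermondeTerm q k p.1 p.2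
        = (qPoch q q N)⁻¹ * (qPoch q q (N + k))⁻¹ +
            q ^ (N + k + 1) * ((qPoch q q N)⁻¹ * (qPoch q q (N + k + 1))⁻¹) := by
          simp only [one_sub_pow_succ_mul_sum_antidiagonal,
            one_sub_mul_qVandermondeTerm_succ_right hq, sum_congr rfl left, ← mul_sum, ih,
            add_assoc]
      _ = (1 - q ^ (N + 1)) * ((qPoch q q (N + 1))⁻¹ * (qPoch q q (N + 1 + k))⁻¹) := by
          rw [inv_qPoch_self hq N, inv_qPoch_self hq (N + k), add_right_comm N 1 k]
          ring

theorem sum_range_min_pow_mul_sub_div_qPoch (hq : ‖q‖ < 1) (N M : ℕ) :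
    ∑ s ∈ range (min N M + 1), q ^ ((N - s) * (M - s)) /
        (qPoch q q (N - s) * qPoch q q (M - s) * qPoch q q s) =
      (qPoch q q N)⁻¹ * (qPoch q q M)⁻¹ := by
  wlog hNM : N ≤ M generalizing N M
  · simpa only [min_comm, mul_comm] using this M N (le_of_not_ge hNM)
  obtain ⟨k, rfl⟩ := Nat.exists_eq_add_of_le hNM
  rw [min_eq_left hNM, ← sum_antidiagonal_qVandermondeTerm hq, ← Nat.sum_antidiagonal_swap,
    Nat.sum_antidiagonal_eq_sum_range_succ_mk]
  refine sum_congr rfl fun s hs => ?_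
  rw [qVandermondeTerm, Prod.fst_swap, Prod.snd_swap,
    Nat.sub_add_comm (Nat.lt_succ_iff.1 (mem_range.1 hs))]

end Vandermonde

section Euler

variable {q : ℂ}

/-- The `s`-th term `(-x) ^ s q ^ (s choose 2) / (q;q)_s` of Euler's expansion of `(x;q)_∞`. -/
noncomputable def eulerTerm (q x : ℂ) (s : ℕ) : ℂ :=
  (-x) ^ s * q ^ s.choose 2 / qPoch q q s

theorem eulerTerm_zero (q x : ℂ) : eulerTerm q x 0 = 1 := by
  simp [eulerTerm, qPoch_zero]

theorem eulerTerm_succ (q x : ℂ) (s : ℕ) :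
    eulerTerm q x (s + 1) = -x * q ^ s / (1 - q ^ (s + 1)) * eulerTerm q x s := by
  rw [eulerTerm, eulerTerm, qPoch_succ, Nat.choose_succ_succ' s 1, Nat.choose_one_right,
    ← pow_succ', div_mul_div_comm, mul_comm (1 - _)]
  ring

theorem eulerTerm_mul_pow (q x : ℂ) (n s : ℕ) :
    eulerTerm q (x * q ^ n) s = (q ^ n) ^ s * eulerTerm q x s := by
  simp only [eulerTerm, ← neg_mul, mul_pow]
  ring

theorem norm_eulerTerm_mul_pow_le (hq : ‖q‖ < 1) (x : ℂ) (n s : ℕ) :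
    ‖eulerTerm q (x * q ^ n) s‖ ≤ ‖eulerTerm q x s‖ := by
  rw [eulerTerm_mul_pow, norm_mul, norm_pow, norm_pow]
  exact mul_le_of_le_one_left (norm_nonneg _)
    (pow_le_one₀ (by positivity) (pow_le_one₀ (norm_nonneg q) hq.le))

theorem one_sub_mul_eulerTerm_succ (hq : ‖q‖ < 1) (x : ℂ) (s : ℕ) :
    (1 - q ^ (s + 1)) * eulerTerm q x (s + 1) = -x * eulerTerm q (x * q) s := by
  have hs : 1 - q ^ (s + 1) ≠ 0 := sub_ne_zero.2 (pow_succ_ne_one_of_norm_lt_one hq s).symm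
  have hshift : eulerTerm q (x * q) s = q ^ s * eulerTerm q x s := by
    simpa only [pow_one] using eulerTerm_mul_pow q x 1 s
  rw [eulerTerm_succ, hshift]
  field_simp

theorem summable_norm_eulerTerm (hq : ‖q‖ < 1) (x : ℂ) : Summable fun s => ‖eulerTerm q x s‖ := by
  have hpow := tendsto_pow_atTop_nhds_zero_of_norm_lt_one hq
  have hratio : Tendsto (fun s : ℕ => ‖-x * q ^ s / (1 - q ^ (s + 1))‖) atTop (𝓝 0) := by
    simpa using ((hpow.const_mul (-x)).div
      ((hpow.comp (tendsto_add_atTop_nat 1)).const_sub 1) (by simp)).norm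
  refine summable_of_ratio_norm_eventually_le one_half_lt_one ?_
  filter_upwards [hratio.eventually_le_const one_half_pos] with s hs
  rw [norm_norm, norm_norm, eulerTerm_succ, norm_mul]
  gcongr

theorem tsum_eulerTerm_eq_one_sub_mul (hq : ‖q‖ < 1) (x : ℂ) :
    ∑' s, eulerTerm q x s = (1 - x) * ∑' s, eulerTerm q (x * q) s := by
  have hx := (summable_norm_eulerTerm hq x).of_norm
  have hxq := (summable_norm_eulerTerm hq (x * q)).of_norm
  have hterm (s : ℕ) : eulerTerm q x (s + 1) - eulerTerm q (x * q) (s + 1) =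
      -x * eulerTerm q (x * q) s := by
    have hshift := eulerTerm_mul_pow q x 1 (s + 1)
    rw [pow_one] at hshift
    rw [← one_sub_mul_eulerTerm_succ hq, hshift]
    ring
  have hdiff : ∑' s, eulerTerm q x s - ∑' s, eulerTerm q (x * q) s =
      -x * ∑' s, eulerTerm q (x * q) s := by
    rw [← hx.tsum_sub hxq, (hx.sub hxq).tsum_eq_zero_add, ← tsum_mul_left]
    simp only [hterm, eulerTerm_zero, sub_self, zero_add]
  linear_combination hdiff

theorem tsum_eulerTerm_eq_qPoch_mul (hq : ‖q‖ < 1) (x : ℂ) (n : ℕ) :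
    ∑' s, eulerTerm q x s = qPoch x q n * ∑' s, eulerTerm q (x * q ^ n) s := by
  induction n with
  | zero => simp only [qPoch_zero, pow_zero, mul_one, one_mul]
  | succ n ih =>
    rw [ih, tsum_eulerTerm_eq_one_sub_mul hq, mul_assoc x, ← pow_succ, qPoch_succ, mul_assoc]

theorem tendsto_tsum_eulerTerm_mul_pow (hq : ‖q‖ < 1) (x : ℂ) :
    Tendsto (fun n : ℕ => ∑' s, eulerTerm q (x * q ^ n) s) atTop (𝓝 1) := by
  rw [← tsum_ite_eq 0 (fun _ => (1 : ℂ))]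
  refine tendsto_tsum_of_dominated_convergence (summable_norm_eulerTerm hq x) (fun s => ?_)
    (.of_forall fun n s => norm_eulerTerm_mul_pow_le hq x n s)
  rcases s with - | s
  · simp only [eulerTerm_zero, if_true, tendsto_const_nhds]
  · have hpow := tendsto_pow_atTop_nhds_zero_of_norm_lt_one hq
    simpa [eulerTerm_mul_pow] using (hpow.pow (s + 1)).mul_const (eulerTerm q x (s + 1))

theorem tsum_eulerTerm (hq : ‖q‖ < 1) (x : ℂ) : ∑' s, eulerTerm q x s = qPochInf x q := by
  have hlim := (tendsto_qPoch_qPochInf hq x).mul (tendsto_tsum_eulerTerm_mul_pow hq x)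
  simp only [← tsum_eulerTerm_eq_qPoch_mul hq, mul_one] at hlim
  exact tendsto_nhds_unique tendsto_const_nhds hlim

end Euler

section Diagonal

theorem hasSum_sum_range_min_sub {E : Type*} [AddCommGroup E] [UniformSpace E]
    [IsUniformAddGroup E] [CompleteSpace E] [T2Space E] {f : (ℕ × ℕ) × ℕ → E} {c : E}
    (hf : HasSum f c) :
    HasSum (fun p : ℕ × ℕ => ∑ s ∈ range (min p.1 p.2 + 1), f ((p.1 - s, p.2 - s), s)) c := by
  convert hf.tsum_fiberwise (fun t => (t.1.1 + t.2, t.1.2 + t.2)) with p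
  let e : ℕ → (ℕ × ℕ) × ℕ := fun s => ((p.1 - s, p.2 - s), s)
  have he : Function.Injective e := fun s t h => congrArg Prod.snd h
  have hfiber : (fun t : (ℕ × ℕ) × ℕ => (t.1.1 + t.2, t.1.2 + t.2)) ⁻¹' {p} =
      ((range (min p.1 p.2 + 1)).map ⟨e, he⟩ : Finset _) := by
    ext ⟨⟨n, m⟩, s⟩
    simp only [Set.mem_preimage, Set.mem_singleton_iff, Prod.ext_iff, coe_map, coe_range,
      Function.Embedding.coeFn_mk, Set.mem_image, Set.mem_Iio, e]
    constructor
    · rintro ⟨hn, hm⟩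
      exact ⟨s, by omega⟩
    · rintro ⟨t, ht⟩
      omega
  rw [hfiber, Finset.tsum_subtype', sum_map]
  rfl

theorem apply_add_add_eq_mul_of_apply_succ_succ {K : Type*} [CommRing K] {q x : K} {R : ℕ → ℕ → K}
    (hR : ∀ n m, R (n + 1) (m + 1) = -(x * q ^ n) * R n m) (n m s : ℕ) :
    R (n + s) (m + s) = (-(x * q ^ n)) ^ s * q ^ s.choose 2 * R n m := by
  induction s with
  | zero => simp
  | succ s ih =>
    rw [← add_assoc, ← add_assoc, hR, ih, Nat.choose_succ_succ' s 1, Nat.choose_one_right]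
    ring

variable {q x : ℂ} {R : ℕ → ℕ → ℂ}

theorem hasSum_div_qPoch_mul_qPoch (hq : ‖q‖ < 1)
    (hR : ∀ n m, R (n + 1) (m + 1) = -(x * q ^ n) * R n m)
    (hsum : Summable fun p : ℕ × ℕ =>
      R p.1 p.2 * q ^ (p.1 * p.2) / (qPoch q q p.1 * qPoch q q p.2)) :
    HasSum (fun p : ℕ × ℕ => R p.1 p.2 / (qPoch q q p.1 * qPoch q q p.2))
      (∑' p : ℕ × ℕ, R p.1 p.2 * q ^ (p.1 * p.2) / (qPoch q q p.1 * qPoch q q p.2) *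
        qPochInf (x * q ^ p.1) q) := by
  set H : ℕ × ℕ → ℂ := fun p => R p.1 p.2 * q ^ (p.1 * p.2) / (qPoch q q p.1 * qPoch q q p.2)
    with hH
  have htriple : Summable fun t : (ℕ × ℕ) × ℕ => H t.1 * eulerTerm q (x * q ^ t.1.1) t.2 := by
    refine .of_norm_bounded (hsum.norm.mul_of_nonneg (summable_norm_eulerTerm hq x)
      (fun _ => norm_nonneg _) (fun _ => norm_nonneg _)) fun t => ?_
    rw [norm_mul]
    gcongr
    exact norm_eulerTerm_mul_pow_le hq x t.1.1 t.2
  have hvalue : ∑' t : (ℕ × ℕ) × ℕ, H t.1 * eulerTerm q (x * q ^ t.1.1) t.2 =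
      ∑' p, H p * qPochInf (x * q ^ p.1) q := by
    simp only [htriple.tsum_prod, tsum_mul_left, tsum_eulerTerm hq]
  have hterm (n m s : ℕ) : H (n, m) * eulerTerm q (x * q ^ n) s =
      R (n + s) (m + s) * (q ^ (n * m) / (qPoch q q n * qPoch q q m * qPoch q q s)) := by
    rw [apply_add_add_eq_mul_of_apply_succ_succ hR, hH, eulerTerm]
    ring
  have hdiagonal (N M : ℕ) : ∑ s ∈ range (min N M + 1),
      H (N - s, M - s) * eulerTerm q (x * q ^ (N - s)) s =
        R N M / (qPoch q q N * qPoch q q M) := by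
    rw [div_eq_mul_inv, mul_inv, ← sum_range_min_pow_mul_sub_div_qPoch hq, mul_sum]
    refine sum_congr rfl fun s hs => ?_
    obtain ⟨hsN, hsM⟩ : s ≤ N ∧ s ≤ M := le_min_iff.1 (Nat.lt_succ_iff.1 (mem_range.1 hs))
    rw [hterm, Nat.sub_add_cancel hsN, Nat.sub_add_cancel hsM]
  simpa only [hvalue, hdiagonal] using hasSum_sum_range_min_sub htriple.hasSum

theorem hasSum_div_qPoch_mul_qPoch_of_ne_zero (hq : ‖q‖ < 1) (hx : ∀ n, qPoch x q n ≠ 0)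
    (hR : ∀ n m, R (n + 1) (m + 1) = -(x * q ^ n) * R n m)
    (hsum : Summable fun p : ℕ × ℕ =>
      R p.1 p.2 * q ^ (p.1 * p.2) / (qPoch q q p.1 * qPoch q q p.2 * qPoch x q p.1)) :
    HasSum (fun p : ℕ × ℕ => R p.1 p.2 / (qPoch q q p.1 * qPoch q q p.2))
      (qPochInf x q * ∑' p : ℕ × ℕ,
        R p.1 p.2 * q ^ (p.1 * p.2) / (qPoch q q p.1 * qPoch q q p.2 * qPoch x q p.1)) := by
  have hmul (p : ℕ × ℕ) : R p.1 p.2 * q ^ (p.1 * p.2) / (qPoch q q p.1 * qPoch q q p.2) =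
      R p.1 p.2 * q ^ (p.1 * p.2) / (qPoch q q p.1 * qPoch q q p.2 * qPoch x q p.1) *
        qPoch x q p.1 := by
    rw [div_mul_eq_mul_div, mul_div_mul_right _ _ (hx p.1)]
  obtain ⟨C, hC⟩ := (tendsto_qPoch_qPochInf hq x).norm.bddAbove_range
  have hsum' : Summable fun p : ℕ × ℕ =>
      R p.1 p.2 * q ^ (p.1 * p.2) / (qPoch q q p.1 * qPoch q q p.2) := by
    refine .of_norm_bounded (hsum.norm.mul_right C) fun p => ?_
    rw [hmul, norm_mul]
    gcongr
    exact hC ⟨p.1, rfl⟩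
  convert hasSum_div_qPoch_mul_qPoch hq hR hsum' using 1
  simp only [hmul, mul_assoc _ (qPoch x q _), qPoch_mul_qPochInf hq, tsum_mul_right]
  exact mul_comm _ _

end Diagonal

section Hypergeometric

variable {q : ℂ}

/-- The quotient `(a q ^ (-n);q)_m / (q/a;q)_n`, the joint contribution of an upper parameter `a`
to the `(n, m)`-term of the double series; a lower parameter contributes its inverse. -/
noncomputable def shiftedQuot (q a : ℂ) (n m : ℕ) : ℂ :=
  qPoch (a * q ^ (-(n : ℤ))) q m / qPoch (q / a) q n

theorem shiftedQuot_succ_succ (hq : q ≠ 0) {a : ℂ} (ha : a ≠ 0) {n : ℕ} (han : a ≠ q ^ (n + 1))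
    (m : ℕ) : shiftedQuot q a (n + 1) (m + 1) = -(a / q ^ (n + 1)) * shiftedQuot q a n m := by
  have hbase : a * q ^ (-((n + 1 : ℕ) : ℤ)) * q = a * q ^ (-(n : ℤ)) := by
    rw [mul_assoc, ← zpow_add_one₀ hq]
    congr 2
    push_cast
    ring
  have hfactor : 1 - a * q ^ (-((n + 1 : ℕ) : ℤ)) = -(a / q ^ (n + 1)) * (1 - q / a * q ^ n) := by
    rw [zpow_neg, zpow_natCast]
    field_simp
    ring
  have hne : 1 - q / a * q ^ n ≠ 0 := by
    rw [div_mul_eq_mul_div, ← pow_succ', sub_ne_zero, ne_comm]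
    exact mt (div_eq_one_iff_eq ha).1 han.symm
  rw [shiftedQuot, shiftedQuot, qPoch_succ_eq_one_sub_mul, qPoch_succ, hbase, hfactor,
    mul_comm (qPoch _ q n), mul_assoc, mul_div_assoc, mul_div_mul_left _ _ hne]

variable {ι κ : Type*} [Fintype ι] [Fintype κ]

/-- The `(n, m)`-term of the double series with upper parameters `a` and lower parameters `b`,
stripped of the factor `1 / ((q;q)_n (q;q)_m)`. -/
noncomputable def phiTerm (q : ℂ) (a : ι → ℂ) (b : κ → ℂ) (x y : ℂ) (n m : ℕ) : ℂ :=
  q ^ n ^ 2 * ((∏ i, qPoch (q / b i) q n) / ∏ i, qPoch (q / a i) q n) *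
    (x * (∏ i, b i) / (y * ∏ i, a i)) ^ n *
    ((∏ i, qPoch (a i * q ^ (-(n : ℤ))) q m) / ∏ i, qPoch (b i * q ^ (-(n : ℤ))) q m) * y ^ m

theorem phiTerm_eq_prod_shiftedQuot (q : ℂ) (a : ι → ℂ) (b : κ → ℂ) (x y : ℂ) (n m : ℕ) :
    phiTerm q a b x y n m = q ^ n ^ 2 * (x * (∏ i, b i) / (y * ∏ i, a i)) ^ n *
      ((∏ i, shiftedQuot q (a i) n m) / ∏ i, shiftedQuot q (b i) n m) * y ^ m := by
  simp only [phiTerm, shiftedQuot, prod_div_distrib, div_div_div_eq]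
  ring

theorem prod_shiftedQuot_succ_succ (hq : q ≠ 0) {a : ι → ℂ} (ha : ∀ i, a i ≠ 0) {n : ℕ}
    (han : ∀ i, a i ≠ q ^ (n + 1)) (m : ℕ) :
    ∏ i, shiftedQuot q (a i) (n + 1) (m + 1) =
      (-(q ^ (n + 1))⁻¹) ^ Fintype.card ι * (∏ i, a i) * ∏ i, shiftedQuot q (a i) n m := by
  have hi (i : ι) : shiftedQuot q (a i) (n + 1) (m + 1) =
      -(q ^ (n + 1))⁻¹ * a i * shiftedQuot q (a i) n m := by
    rw [shiftedQuot_succ_succ hq (ha i) (han i), div_eq_inv_mul, ← neg_mul]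
  simp only [hi, prod_mul_distrib, prod_const, card_univ]

theorem phiTerm_succ_succ (hcard : Fintype.card ι = Fintype.card κ + 1) (hq : q ≠ 0)
    {a : ι → ℂ} {b : κ → ℂ} (ha : ∀ i, a i ≠ 0) (hb : ∀ i, b i ≠ 0) {n : ℕ}
    (han : ∀ i, a i ≠ q ^ (n + 1)) (hbn : ∀ i, b i ≠ q ^ (n + 1)) (x : ℂ) {y : ℂ} (hy : y ≠ 0)
    (m : ℕ) : phiTerm q a b x y (n + 1) (m + 1) = -(x * q ^ n) * phiTerm q a b x y n m := by
  have hA : ∏ i, a i ≠ 0 := prod_ne_zero_iff.2 fun i _ => ha i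
  have hB : ∏ i, b i ≠ 0 := prod_ne_zero_iff.2 fun i _ => hb i
  have hc : -(q ^ (n + 1))⁻¹ ≠ 0 := neg_ne_zero.2 (inv_ne_zero (pow_ne_zero _ hq))
  have hquot :
      (∏ i, shiftedQuot q (a i) (n + 1) (m + 1)) / ∏ i, shiftedQuot q (b i) (n + 1) (m + 1) =
        -(q ^ (n + 1))⁻¹ * ((∏ i, a i) / ∏ i, b i) *
          ((∏ i, shiftedQuot q (a i) n m) / ∏ i, shiftedQuot q (b i) n m) := by
    rw [prod_shiftedQuot_succ_succ hq ha han, prod_shiftedQuot_succ_succ hq hb hbn, hcard,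
      mul_div_mul_comm, mul_div_mul_comm, pow_succ', mul_div_cancel_right₀ _ (pow_ne_zero _ hc)]
  have hz : x * (∏ i, b i) / (y * ∏ i, a i) * ((∏ i, a i) / ∏ i, b i) * y = x := by
    field_simp
  have hpow : q ^ (n + 1) ^ 2 * (q ^ (n + 1))⁻¹ = q ^ n ^ 2 * q ^ n := by
    field_simp
    ring
  rw [phiTerm_eq_prod_shiftedQuot, phiTerm_eq_prod_shiftedQuot, hquot, pow_succ _ n, pow_succ y]
  generalize x * (∏ i, b i) / (y * ∏ i, a i) = z at hz ⊢
  calc _ = -(q ^ (n + 1) ^ 2 * (q ^ (n + 1))⁻¹ * (z * ((∏ i, a i) / ∏ i, b i) * y)) *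
        (z ^ n * ((∏ i, shiftedQuot q (a i) n m) / ∏ i, shiftedQuot q (b i) n m) * y ^ m) := by
        ring
    _ = _ := by
        rw [hpow, hz]
        ring

end Hypergeometric

theorem stmt19 (q : ℂ) (hq0 : 0 < ‖q‖) (hq1 : ‖q‖ < 1)
    (r : ℕ) (hr : 0 < r) (a : Fin (r + 1) → ℂ) (b : Fin r → ℂ)
    (ha0 : ∀ i, a i ≠ 0) (hb0 : ∀ i, b i ≠ 0)
    (haq : ∀ i, ∀ m : ℕ, 1 ≤ m → a i ≠ q ^ m)
    (hbq : ∀ i, ∀ m : ℕ, 1 ≤ m → b i ≠ q ^ m)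
    (hbz : ∀ i, ∀ m : ℤ, b i ≠ q ^ m)
    (x y : ℂ) (hy : y ≠ 0) (hx : ∀ m : ℕ, x ≠ q ^ (-(m : ℤ)))
    (h1 : Summable (fun nm : ℕ × ℕ =>
      ‖q ^ (nm.1 ^ 2) * ((∏ i, qPoch (q / b i) q nm.1) / ∏ i, qPoch (q / a i) q nm.1) *
        (x * (∏ i, b i) / (y * ∏ i, a i)) ^ nm.1 *
        ((∏ i, qPoch (a i * q ^ (-(nm.1 : ℤ))) q nm.2) /
          (qPoch q q nm.2 * ∏ i, qPoch (b i * q ^ (-(nm.1 : ℤ))) q nm.2)) *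
        y ^ nm.2 / qPoch q q nm.1‖))
    (h2 : Summable (fun nm : ℕ × ℕ =>
      ‖q ^ (nm.1 ^ 2) * ((∏ i, qPoch (q / b i) q nm.1) / ∏ i, qPoch (q / a i) q nm.1) *
        (x * (∏ i, b i) / (y * ∏ i, a i)) ^ nm.1 *
        ((∏ i, qPoch (a i * q ^ (-(nm.1 : ℤ))) q nm.2) /
          (qPoch q q nm.2 * ∏ i, qPoch (b i * q ^ (-(nm.1 : ℤ))) q nm.2)) *
        (y * q ^ nm.1) ^ nm.2 / (qPoch q q nm.1 * qPoch x q nm.1)‖)) :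
    ∑' n : ℕ, (q ^ (n ^ 2) / qPoch q q n) *
      ((∏ i, qPoch (q / b i) q n) / ∏ i, qPoch (q / a i) q n) *
      (x * (∏ i, b i) / (y * ∏ i, a i)) ^ n *
      ∑' m : ℕ, (∏ i, qPoch (a i * q ^ (-(n : ℤ))) q m) /
        (qPoch q q m * ∏ i, qPoch (b i * q ^ (-(n : ℤ))) q m) * y ^ m
    = qPochInf x q * ∑' n : ℕ, (q ^ (n ^ 2) / (qPoch q q n * qPoch x q n)) *
      ((∏ i, qPoch (q / b i) q n) / ∏ i, qPoch (q / a i) q n) *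
      (x * (∏ i, b i) / (y * ∏ i, a i)) ^ n *
      ∑' m : ℕ, (∏ i, qPoch (a i * q ^ (-(n : ℤ))) q m) /
        (qPoch q q m * ∏ i, qPoch (b i * q ^ (-(n : ℤ))) q m) * (y * q ^ n) ^ m := by
  have hR (n m : ℕ) := phiTerm_succ_succ (by simp) (norm_pos_iff.1 hq0) ha0 hb0
    (fun i => haq i (n + 1) n.succ_pos) (fun i => hbq i (n + 1) n.succ_pos) x hy m
  have hxn (n : ℕ) : qPoch x q n ≠ 0 := qPoch_ne_zero_iff.2 fun k _ hk =>
    hx k (by rw [zpow_neg, zpow_natCast, eq_inv_of_mul_eq_one_left hk])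
  have hsum : Summable fun p : ℕ × ℕ => phiTerm q a b x y p.1 p.2 * q ^ (p.1 * p.2) /
      (qPoch q q p.1 * qPoch q q p.2 * qPoch x q p.1) := by
    refine h2.of_norm.congr fun p => ?_
    rw [phiTerm]
    ring
  have hdouble := hasSum_div_qPoch_mul_qPoch_of_ne_zero hq1 hxn hR hsum
  have hiterated := hdouble.tsum_eq
  rw [hdouble.summable.tsum_prod, hsum.tsum_prod] at hiterated
  simp only [← tsum_mul_left] at hiterated ⊢
  convert hiterated using 1
  all_goals
    refine tsum_congr fun n => tsum_congr fun m => ?_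
    rw [phiTerm]
    ring
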